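/- If n - 2k + 3 ≥ 0, then the function x ↦ (x^n - x^k)/(x^n - 1) is concave on (1, ∞), for integers 1 ≤ k < n. -/

import Mathlib

/-!
Since `(x ^ n - x ^ k) / (x ^ n - 1) = 1 - (x ^ k - 1) / (x ^ n - 1)`, one has to show that the
quotient `g` on the right is convex. The elasticity `E p = x * u' / u` of `u = x ^ p - 1` satisfies
`x * (E p)' = E p * (p - E p)`, which turns `x ^ 2 * g'' / g` into
`(k - 1) * E k + 2 * E n * (E n - E k) - (n - 1) * E n`.
With `x = exp t` one has `E p = p / 2 + (u * coth u) / t` at `u = p * t / 2`, and the sign then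
follows from the fact that `(u * coth u) ^ 2 - 2 / 3 * u ^ 2` increases with `u`; the constant is
the one in the expansion `(u * coth u) ^ 2 = 1 + 2 / 3 * u ^ 2 + O(u ^ 4)`.
-/

open Real Set

/-- The function `u ↦ u * coth u`, to be used for `u ≠ 0` only: the division by zero makes it vanish
at `0`, whereas its limit there is `1`. -/
noncomputable def mulCoth (u : ℝ) : ℝ := u * cosh u / sinh u

/-- The elasticity `x * f' x / f x` of `f x = x ^ p - 1`, meaningful where `x ^ p ≠ 1`. -/
noncomputable def elasticity (p x : ℝ) : ℝ := p * x ^ p / (x ^ p - 1)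

lemma mul_cosh_le_sinh_add_sinh_cube {u : ℝ} (hu : 0 ≤ u) :
    u * cosh u ≤ sinh u + sinh u ^ 3 / 3 := by
  have hderiv (v : ℝ) : HasDerivAt (fun v => sinh v + sinh v ^ 3 / 3 - v * cosh v)
      (sinh v * (sinh v * cosh v - v)) v := by
    refine (((hasDerivAt_sinh v).add (((hasDerivAt_sinh v).pow 3).div_const 3)).sub
      ((hasDerivAt_id v).mul (hasDerivAt_cosh v))).congr_deriv ?_
    simp only [id]
    ring
  have hmono : MonotoneOn (fun v => sinh v + sinh v ^ 3 / 3 - v * cosh v) (Ici 0) := by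
    refine monotoneOn_of_hasDerivWithinAt_nonneg (convex_Ici 0) (by fun_prop)
      (fun v _ => (hderiv v).hasDerivWithinAt) fun v hv => ?_
    have hv0 : 0 ≤ v := interior_subset hv
    have hsinh : v ≤ sinh v := self_le_sinh_iff.2 hv0
    have hsinh_mul_cosh : sinh v ≤ sinh v * cosh v :=
      le_mul_of_one_le_right (hv0.trans hsinh) (one_le_cosh v)
    exact mul_nonneg (hv0.trans hsinh) (by linarith)
  simpa using hmono self_mem_Ici hu hu

lemma mulCoth_nonneg (u : ℝ) : 0 ≤ mulCoth u := by
  rcases le_total 0 u with hu | hu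
  · exact div_nonneg (mul_nonneg hu (cosh_pos u).le) (sinh_nonneg_iff.2 hu)
  · exact div_nonneg_of_nonpos (mul_nonpos_of_nonpos_of_nonneg hu (cosh_pos u).le)
      (sinh_nonpos_iff.2 hu)

lemma hasDerivAt_mulCoth {u : ℝ} (hu : u ≠ 0) :
    HasDerivAt mulCoth ((sinh u * cosh u - u) / sinh u ^ 2) u := by
  refine (((hasDerivAt_id u).mul (hasDerivAt_cosh u)).div (hasDerivAt_sinh u)
    (sinh_ne_zero.2 hu)).congr_deriv ?_
  simp only [id, Pi.mul_apply]
  congr 1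
  linear_combination -u * cosh_sq u

lemma monotoneOn_mulCoth_sq_sub :
    MonotoneOn (fun u => mulCoth u ^ 2 - 2 / 3 * u ^ 2) (Ioi 0) := by
  have hderiv {u : ℝ} (hu : 0 < u) : HasDerivAt (fun u => mulCoth u ^ 2 - 2 / 3 * u ^ 2)
      (2 * u / sinh u ^ 3 * (sinh u + sinh u ^ 3 / 3 - u * cosh u)) u := by
    have hs : sinh u ≠ 0 := sinh_ne_zero.2 hu.ne'
    refine (((hasDerivAt_mulCoth hu.ne').pow 2).sub
      ((hasDerivAt_pow 2 u).const_mul (2 / 3))).congr_deriv ?_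
    have hvalue : mulCoth u * sinh u = u * cosh u := div_mul_cancel₀ _ hs
    field_simp
    linear_combination 6 * (sinh u * cosh u - u) * hvalue + 6 * u * sinh u * cosh_sq u
  refine monotoneOn_of_hasDerivWithinAt_nonneg (convex_Ioi 0)
    (fun u hu => (hderiv hu).continuousAt.continuousWithinAt)
    (fun u hu => (hderiv (interior_subset hu)).hasDerivWithinAt) fun u hu => ?_
  have hu0 : 0 < u := interior_subset hu
  exact mul_nonneg (by positivity) (sub_nonneg.2 (mul_cosh_le_sinh_add_sinh_cube hu0.le))

lemma monotoneOn_mulCoth : MonotoneOn mulCoth (Ioi 0) := by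
  intro a ha b hb hab
  have hsq : a ^ 2 ≤ b ^ 2 := pow_le_pow_left₀ (mem_Ioi.1 ha).le hab 2
  have hmono := monotoneOn_mulCoth_sq_sub ha hb hab
  exact le_of_sq_le_sq (by linarith) (mulCoth_nonneg b)

lemma sq_sub_sq_div_three_le_mulCoth_mul {a b : ℝ} (ha : 0 < a) (hab : a ≤ b) :
    (b ^ 2 - a ^ 2) / 3 ≤ mulCoth b * (mulCoth b - mulCoth a) := by
  have hb : 0 < b := ha.trans_le hab
  have hmono := monotoneOn_mulCoth_sq_sub ha hb hab
  linear_combination hmono / 2 + sq_nonneg (mulCoth b - mulCoth a) / 2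

section elasticity

variable {p n k x : ℝ}

lemma elasticity_eq_add_mulCoth (hx : 0 < x) (hp : x ^ p ≠ 1) :
    elasticity p x = p / 2 + mulCoth (p * log x / 2) / log x := by
  have hlog : log x ≠ 0 := fun h0 => hp (by rw [rpow_def_of_pos hx, h0, zero_mul, exp_zero])
  set u := p * log x / 2 with hu
  have hu_div : u / log x = p / 2 := by rw [hu]; field_simp
  have hpow : x ^ p = exp u ^ 2 := by
    rw [← exp_nat_mul, rpow_def_of_pos hx, hu]
    congr 1
    push_cast
    ring
  have hne : exp u ^ 2 - 1 ≠ 0 := hpow ▸ sub_ne_zero.2 hp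
  have hcoth : cosh u / sinh u = (exp u ^ 2 + 1) / (exp u ^ 2 - 1) := by
    have hexp : exp u ≠ 0 := exp_ne_zero u
    rw [cosh_eq, sinh_eq, exp_neg]
    field_simp
  rw [elasticity, hpow, mulCoth, mul_div_assoc u, hcoth, mul_div_right_comm u, hu_div]
  field_simp
  ring

lemma sub_one_mul_elasticity_le (hk : 0 < k) (hkn : k ≤ n) (h : 2 * k ≤ n + 3) (hx : 1 < x) :
    (n - 1) * elasticity n x ≤
      (k - 1) * elasticity k x + 2 * elasticity n x * (elasticity n x - elasticity k x) := by
  have hn : 0 < n := hk.trans_le hkn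
  have ht : 0 < log x := log_pos hx
  have hx0 : 0 < x := zero_lt_one.trans hx
  rw [elasticity_eq_add_mulCoth hx0 (one_lt_rpow hx hk).ne',
    elasticity_eq_add_mulCoth hx0 (one_lt_rpow hx hn).ne']
  set t := log x
  have hk' : 0 < k * t / 2 := by positivity
  have hkn' : k * t / 2 ≤ n * t / 2 := by gcongr
  set K := mulCoth (k * t / 2) / t with hK
  set N := mulCoth (n * t / 2) / t with hN
  have hKN : K ≤ N :=
    div_le_div_of_nonneg_right (monotoneOn_mulCoth hk' (hk'.trans_le hkn') hkn') ht.le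
  have hprod : (n ^ 2 - k ^ 2) / 12 ≤ N * (N - K) := by
    calc (n ^ 2 - k ^ 2) / 12 = (((n * t / 2) ^ 2 - (k * t / 2) ^ 2) / 3) / t ^ 2 := by
          field_simp; ring
      _ ≤ mulCoth (n * t / 2) * (mulCoth (n * t / 2) - mulCoth (k * t / 2)) / t ^ 2 := by
          gcongr; exact sq_sub_sq_div_three_le_mulCoth_mul hk' hkn'
      _ = N * (N - K) := by rw [hK, hN]; field_simp
  have hdiff : 0 ≤ (n - k + 1) * (N - K) := mul_nonneg (by linarith) (sub_nonneg.2 hKN)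
  have hexponents : 0 ≤ (n - k) * (n + 3 - 2 * k) :=
    mul_nonneg (sub_nonneg.2 hkn) (by linarith)
  -- The difference of the two sides is
  -- `2 * N * (N - K) + (n - k + 1) * (N - K) - (n - k) * (k - 1) / 2`.
  linear_combination 2 * hprod + hdiff + hexponents / 6

lemma hasDerivAt_rpow_sub_one (hx : x ≠ 0) (hp : x ^ p ≠ 1) :
    HasDerivAt (fun y => y ^ p - 1) ((x ^ p - 1) * elasticity p x / x) x := by
  refine ((hasDerivAt_rpow_const (Or.inl hx)).sub_const 1).congr_deriv ?_
  rw [elasticity, rpow_sub_one hx, mul_div_cancel₀ _ (sub_ne_zero.2 hp), mul_div_assoc]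

lemma hasDerivAt_elasticity (hx : x ≠ 0) (hp : x ^ p ≠ 1) :
    HasDerivAt (elasticity p) (elasticity p x * (p - elasticity p x) / x) x := by
  have hne : x ^ p - 1 ≠ 0 := sub_ne_zero.2 hp
  refine (((hasDerivAt_rpow_const (Or.inl hx)).const_mul p).div
    (hasDerivAt_rpow_sub_one hx hp) hne).congr_deriv ?_
  rw [elasticity, rpow_sub_one hx]
  field_simp

lemma hasDerivAt_rpow_sub_one_div (hx : x ≠ 0) (hk : x ^ k ≠ 1) (hn : x ^ n ≠ 1) :
    HasDerivAt (fun y => (y ^ k - 1) / (y ^ n - 1))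
      ((x ^ k - 1) / (x ^ n - 1) * ((elasticity k x - elasticity n x) / x)) x := by
  have hne : x ^ n - 1 ≠ 0 := sub_ne_zero.2 hn
  refine ((hasDerivAt_rpow_sub_one hx hk).div (hasDerivAt_rpow_sub_one hx hn) hne).congr_deriv ?_
  field_simp

lemma hasDerivAt_deriv_rpow_sub_one_div (hx : x ≠ 0) (hk : x ^ k ≠ 1) (hn : x ^ n ≠ 1) :
    HasDerivAt
      (fun y => (y ^ k - 1) / (y ^ n - 1) * ((elasticity k y - elasticity n y) / y))
      ((x ^ k - 1) / (x ^ n - 1) / x ^ 2 *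
        ((k - 1) * elasticity k x + 2 * elasticity n x * (elasticity n x - elasticity k x)
          - (n - 1) * elasticity n x)) x := by
  refine ((hasDerivAt_rpow_sub_one_div hx hk hn).mul
    (((hasDerivAt_elasticity hx hk).sub (hasDerivAt_elasticity hx hn)).div
      (hasDerivAt_id x) hx)).congr_deriv ?_
  simp only [id, Pi.sub_apply, Pi.div_apply]
  field_simp
  ring

lemma convexOn_rpow_sub_one_div (hk : 0 < k) (hkn : k ≤ n) (h : 2 * k ≤ n + 3) :
    ConvexOn ℝ (Ioi 1) fun x : ℝ => (x ^ k - 1) / (x ^ n - 1) := by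
  have hn : 0 < n := hk.trans_le hkn
  have hx_ne {x : ℝ} (hx : 1 < x) : x ≠ 0 ∧ x ^ k ≠ 1 ∧ x ^ n ≠ 1 :=
    ⟨(zero_lt_one.trans hx).ne', (one_lt_rpow hx hk).ne', (one_lt_rpow hx hn).ne'⟩
  have hderiv {x : ℝ} (hx : 1 < x) :=
    hasDerivAt_rpow_sub_one_div (hx_ne hx).1 (hx_ne hx).2.1 (hx_ne hx).2.2
  have hderiv_deriv {x : ℝ} (hx : 1 < x) :=
    hasDerivAt_deriv_rpow_sub_one_div (hx_ne hx).1 (hx_ne hx).2.1 (hx_ne hx).2.2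
  refine convexOn_of_hasDerivWithinAt2_nonneg (convex_Ioi 1)
    (fun x hx => (hderiv hx).continuousAt.continuousWithinAt)
    (fun x hx => (hderiv (interior_subset hx)).hasDerivWithinAt)
    (fun x hx => (hderiv_deriv (interior_subset hx)).hasDerivWithinAt) fun x hx => ?_
  have hx1 : 1 < x := interior_subset hx
  have hnum : 0 < x ^ k - 1 := sub_pos.2 (one_lt_rpow hx1 hk)
  have hden : 0 < x ^ n - 1 := sub_pos.2 (one_lt_rpow hx1 hn)
  exact mul_nonneg (by positivity) (sub_nonneg.2 (sub_one_mul_elasticity_le hk hkn h hx1))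

end elasticity

theorem stmt_16_general {n k : ℝ} (hk : 0 < k) (hkn : k ≤ n) (h : 0 ≤ n - 2 * k + 3) :
    ConcaveOn ℝ (Ioi 1) fun x : ℝ => (x ^ n - x ^ k) / (x ^ n - 1) := by
  have hconvex := convexOn_rpow_sub_one_div hk hkn (by linarith)
  refine ((concaveOn_const 1 (convex_Ioi 1)).sub hconvex).congr fun x hx => ?_
  have hne : x ^ n - 1 ≠ 0 := sub_ne_zero.2 (one_lt_rpow hx (hk.trans_le hkn)).ne'
  simp only [Pi.sub_apply]
  field_simp
  ring

theorem stmt_16 (n k : ℕ) (hk : 1 ≤ k) (hkn : k < n)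
    (h : (n : ℝ) - 2 * k + 3 ≥ 0) :
    ConcaveOn ℝ (Set.Ioi 1) (fun x : ℝ => (x ^ n - x ^ k) / (x ^ n - 1)) := by
  simpa only [rpow_natCast] using
    stmt_16_general (n := n) (k := k) (by exact_mod_cast hk) (by exact_mod_cast hkn.le) h
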